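/- Weak bound on the forcing term: let d ≥ 1 and let W, a, b : ℤ^d → ℂ satisfy ∑_l |W(l)| |l| < ∞, ∑_l |W(l)| |l|^{3/2} < ∞, ∑_k |a(k)|² < ∞, ∑_k |k| |a(k)|² < ∞ and ∑_k |k| |b(k)|² < ∞. Then the double family (W(l) a(−l−k) b(k) (l·k))_{l,k∈ℤ^d} is summable and |∑_{l∈ℤ^d} ∑_{k∈ℤ^d} W(l) a(−l−k) b(k) (l·k)| ≤ (∑_l |W(l)| |l|) (∑_k |k| |a(k)|²)^{1/2} (∑_k |k| |b(k)|²)^{1/2} + (∑_l |W(l)| |l|^{3/2}) (∑_k |a(k)|²)^{1/2} (∑_k |k| |b(k)|²)^{1/2}. -/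

import Mathlib

/-!
The proof rests on the pointwise estimate `|l·k| ≤ |l||k|^{1/2}(|l+k|^{1/2} + |l|^{1/2})`, which
combines the Cauchy–Schwarz inequality in `ℝ^d` with the subadditivity of `|·|^{1/2}` applied to
`k = (l+k) - l`. For fixed `l` this splits the sum over `k` into two pieces, each of which is
controlled by Cauchy–Schwarz in `ℓ²` (`summable_mul_and_tsum_mul_le`), the map `k ↦ -l-k` being a
bijection of the lattice. The resulting bound `rowBound` (`row_summable_and_le`) is summable in `l`,
which gives absolute summability of the double family and, by summing over `l`, the inequality.
-/

open scoped BigOperators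

/-- Euclidean norm of a lattice point `k ∈ ℤ^d`. -/
noncomputable def znorm {d : ℕ} (k : Fin d → ℤ) : ℝ :=
  Real.sqrt (∑ i, ((k i : ℝ)) ^ 2)

/-- Dot product `l · k` of lattice points, as a complex number. -/
def zdot {d : ℕ} (l k : Fin d → ℤ) : ℂ :=
  ((∑ i, l i * k i : ℤ) : ℂ)

/-- The lattice point `k`, seen in Euclidean space. -/
noncomputable def toEuclid {d : ℕ} (k : Fin d → ℤ) : EuclideanSpace ℝ (Fin d) :=
  WithLp.toLp 2 fun i => (k i : ℝ)

lemma znorm_eq_norm {d : ℕ} (k : Fin d → ℤ) : znorm k = ‖toEuclid k‖ := by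
  simp [znorm, toEuclid, EuclideanSpace.norm_eq]

lemma znorm_nonneg {d : ℕ} (k : Fin d → ℤ) : 0 ≤ znorm k := Real.sqrt_nonneg _

lemma norm_zdot_le {d : ℕ} (l k : Fin d → ℤ) : ‖zdot l k‖ ≤ znorm l * znorm k := by
  have h := abs_real_inner_le_norm (toEuclid l) (toEuclid k)
  have e : inner ℝ (toEuclid l) (toEuclid k) = ((∑ i, l i * k i : ℤ) : ℝ) := by
    simp [toEuclid, PiLp.inner_apply, mul_comm]
  rw [e] at h
  rw [zdot, Complex.norm_intCast, znorm_eq_norm, znorm_eq_norm]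
  exact h

lemma sqrt_znorm_le {d : ℕ} (l k : Fin d → ℤ) :
    √(znorm k) ≤ √(znorm (-l - k)) + √(znorm l) := by
  have h : znorm k ≤ znorm (-l - k) + znorm l := by
    rw [znorm_eq_norm, znorm_eq_norm, znorm_eq_norm]
    have e : toEuclid k = -(toEuclid (-l - k) + toEuclid l) := by
      ext i
      simp [toEuclid]
    rw [e, norm_neg]
    exact norm_add_le _ _
  refine Real.sqrt_le_iff.2 ⟨by positivity, ?_⟩
  nlinarith [Real.sq_sqrt (znorm_nonneg (-l - k)), Real.sq_sqrt (znorm_nonneg l),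
    Real.sqrt_nonneg (znorm (-l - k)), Real.sqrt_nonneg (znorm l),
    mul_nonneg (Real.sqrt_nonneg (znorm (-l - k))) (Real.sqrt_nonneg (znorm l))]

/-- Cauchy–Schwarz in `ℓ²`, with the squares written as natural powers. -/
lemma summable_mul_and_tsum_mul_le {ι : Type*} {f g : ι → ℝ} (hf0 : ∀ i, 0 ≤ f i)
    (hg0 : ∀ i, 0 ≤ g i) (hf : Summable fun i => f i ^ 2) (hg : Summable fun i => g i ^ 2) :
    (Summable fun i => f i * g i) ∧
      ∑' i, f i * g i ≤ √(∑' i, f i ^ 2) * √(∑' i, g i ^ 2) := by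
  have hf' : Summable fun i => f i ^ (2 : ℝ) := by simpa using hf
  have hg' : Summable fun i => g i ^ (2 : ℝ) := by simpa using hg
  have hs := Real.summable_mul_of_Lp_Lq_of_nonneg Real.HolderConjugate.two_two hf0 hg0 hf' hg'
  have h := Real.inner_le_Lp_mul_Lq_tsum_of_nonneg Real.HolderConjugate.two_two hf0 hg0 hf' hg'
  exact ⟨hs, by simpa [Real.sqrt_eq_rpow] using h⟩

/-- Bound for the `l`-th row `∑_k |W(l) a(-l-k) b(k) (l·k)|` of the double family. -/
noncomputable def rowBound {d : ℕ} (W a b : (Fin d → ℤ) → ℂ) (l : Fin d → ℤ) : ℝ :=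
  ‖W l‖ * znorm l * (√(∑' k, znorm k * ‖a k‖ ^ 2) * √(∑' k, znorm k * ‖b k‖ ^ 2)) +
    ‖W l‖ * znorm l ^ ((3 : ℝ) / 2) * (√(∑' k, ‖a k‖ ^ 2) * √(∑' k, znorm k * ‖b k‖ ^ 2))

lemma norm_term_le {d : ℕ} (W a b : (Fin d → ℤ) → ℂ) (l k : Fin d → ℤ) :
    ‖W l * a (-l - k) * b k * zdot l k‖ ≤
      ‖W l‖ * znorm l * ((√(znorm (-l - k)) * ‖a (-l - k)‖) * (√(znorm k) * ‖b k‖)) +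
        ‖W l‖ * znorm l ^ ((3 : ℝ) / 2) * (‖a (-l - k)‖ * (√(znorm k) * ‖b k‖)) := by
  have hpow : znorm l ^ ((3 : ℝ) / 2) = znorm l * √(znorm l) := by
    rw [show (3 : ℝ) / 2 = 1 + 1 / 2 by norm_num,
      Real.rpow_add_of_nonneg (znorm_nonneg l) (by norm_num) (by norm_num), Real.rpow_one,
      ← Real.sqrt_eq_rpow]
  have hl := znorm_nonneg l
  calc ‖W l * a (-l - k) * b k * zdot l k‖
      = ‖W l‖ * ‖a (-l - k)‖ * ‖b k‖ * ‖zdot l k‖ := by simp only [norm_mul]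
    _ ≤ ‖W l‖ * ‖a (-l - k)‖ * ‖b k‖ * (znorm l * znorm k) := by
        gcongr
        exact norm_zdot_le l k
    _ = ‖W l‖ * ‖a (-l - k)‖ * ‖b k‖ * (znorm l * (√(znorm k) * √(znorm k))) := by
        rw [Real.mul_self_sqrt (znorm_nonneg k)]
    _ ≤ ‖W l‖ * ‖a (-l - k)‖ * ‖b k‖ *
          (znorm l * (√(znorm k) * (√(znorm (-l - k)) + √(znorm l)))) := by
        gcongr
        exact sqrt_znorm_le l k
    _ = _ := by
        rw [hpow]
        ring

lemma row_summable_and_le {d : ℕ} (W a b : (Fin d → ℤ) → ℂ)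
    (ha1 : Summable fun k => ‖a k‖ ^ 2)
    (ha2 : Summable fun k => znorm k * ‖a k‖ ^ 2)
    (hb : Summable fun k => znorm k * ‖b k‖ ^ 2) (l : Fin d → ℤ) :
    (Summable fun k => ‖W l * a (-l - k) * b k * zdot l k‖) ∧
      ∑' k, ‖W l * a (-l - k) * b k * zdot l k‖ ≤ rowBound W a b l := by
  have hsq : ∀ (c : (Fin d → ℤ) → ℂ) (k : Fin d → ℤ),
      (√(znorm k) * ‖c k‖) ^ 2 = znorm k * ‖c k‖ ^ 2 := fun c k => by
    rw [mul_pow, Real.sq_sqrt (znorm_nonneg k)]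
  have hb' : Summable fun k => (√(znorm k) * ‖b k‖) ^ 2 := by simpa only [hsq] using hb
  have ha2' : Summable fun k => (√(znorm (-l - k)) * ‖a (-l - k)‖) ^ 2 := by
    simp only [hsq]
    exact ha2.comp_injective (i := fun k => -l - k) sub_right_injective
  have ha1' : Summable fun k => ‖a (-l - k)‖ ^ 2 :=
    ha1.comp_injective (i := fun k => -l - k) sub_right_injective
  obtain ⟨s1, t1⟩ := summable_mul_and_tsum_mul_le
    (f := fun k => √(znorm (-l - k)) * ‖a (-l - k)‖)
    (g := fun k => √(znorm k) * ‖b k‖) (fun k => by positivity) (fun k => by positivity) ha2' hb'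
  obtain ⟨s2, t2⟩ := summable_mul_and_tsum_mul_le (f := fun k => ‖a (-l - k)‖)
    (g := fun k => √(znorm k) * ‖b k‖) (fun k => by positivity) (fun k => by positivity) ha1' hb'
  simp only [hsq] at t1 t2
  have e1 : ∑' k, znorm (-l - k) * ‖a (-l - k)‖ ^ 2 = ∑' k, znorm k * ‖a k‖ ^ 2 :=
    (Equiv.subLeft (-l)).tsum_eq fun k => znorm k * ‖a k‖ ^ 2
  have e2 : ∑' k, ‖a (-l - k)‖ ^ 2 = ∑' k, ‖a k‖ ^ 2 :=
    (Equiv.subLeft (-l)).tsum_eq fun k => ‖a k‖ ^ 2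
  rw [e1] at t1
  rw [e2] at t2
  have s1' := s1.mul_left (‖W l‖ * znorm l)
  have s2' := s2.mul_left (‖W l‖ * znorm l ^ ((3 : ℝ) / 2))
  have hs : Summable fun k => ‖W l * a (-l - k) * b k * zdot l k‖ :=
    (s1'.add s2').of_nonneg_of_le (fun _ => norm_nonneg _) (norm_term_le W a b l)
  refine ⟨hs, (hs.tsum_le_tsum (norm_term_le W a b l) (s1'.add s2')).trans ?_⟩
  rw [s1'.tsum_add s2', tsum_mul_left, tsum_mul_left, rowBound]
  have hl := znorm_nonneg l
  gcongr

/-- **Weak bound on the forcing term.**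
If `∑ |W l||l| < ∞`, `∑ |W l||l|^{3/2} < ∞`, `∑ |a k|² < ∞`, `∑ |k||a k|² < ∞` and
`∑ |k||b k|² < ∞`, then the double family `(W(l) a(−l−k) b(k) (l·k))_{l,k}` is summable
and `|∑_l ∑_k W(l) a(−l−k) b(k) (l·k)| ≤
  (∑ |W l||l|)(∑ |k||a k|²)^{1/2}(∑ |k||b k|²)^{1/2}
  + (∑ |W l||l|^{3/2})(∑ |a k|²)^{1/2}(∑ |k||b k|²)^{1/2}`. -/
theorem weak_bound_forcing_term (d : ℕ) (hd : 1 ≤ d) (W a b : (Fin d → ℤ) → ℂ)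
    (hW1 : Summable fun l => ‖W l‖ * znorm l)
    (hW2 : Summable fun l => ‖W l‖ * znorm l ^ ((3 : ℝ) / 2))
    (ha1 : Summable fun k => ‖a k‖ ^ 2)
    (ha2 : Summable fun k => znorm k * ‖a k‖ ^ 2)
    (hb : Summable fun k => znorm k * ‖b k‖ ^ 2) :
    Summable (fun p : (Fin d → ℤ) × (Fin d → ℤ) =>
        W p.1 * a (-p.1 - p.2) * b p.2 * zdot p.1 p.2) ∧
      ‖∑' l, ∑' k, W l * a (-l - k) * b k * zdot l k‖ ≤
        (∑' l, ‖W l‖ * znorm l) * Real.sqrt (∑' k, znorm k * ‖a k‖ ^ 2) *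
            Real.sqrt (∑' k, znorm k * ‖b k‖ ^ 2) +
          (∑' l, ‖W l‖ * znorm l ^ ((3 : ℝ) / 2)) * Real.sqrt (∑' k, ‖a k‖ ^ 2) *
            Real.sqrt (∑' k, znorm k * ‖b k‖ ^ 2) := by
  have hrow := row_summable_and_le W a b ha1 ha2 hb
  have hB1 := hW1.mul_right (√(∑' k, znorm k * ‖a k‖ ^ 2) * √(∑' k, znorm k * ‖b k‖ ^ 2))
  have hB2 := hW2.mul_right (√(∑' k, ‖a k‖ ^ 2) * √(∑' k, znorm k * ‖b k‖ ^ 2))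
  have hB : Summable (rowBound W a b) := hB1.add hB2
  constructor
  · refine Summable.of_norm ((summable_prod_of_nonneg fun _ => norm_nonneg _).2
      ⟨fun l => (hrow l).1, ?_⟩)
    exact hB.of_nonneg_of_le (fun l => tsum_nonneg fun _ => norm_nonneg _) fun l => (hrow l).2
  · refine (tsum_of_norm_bounded hB.hasSum fun l =>
      (norm_tsum_le_tsum_norm (hrow l).1).trans (hrow l).2).trans_eq ?_
    simp only [rowBound]
    rw [hB1.tsum_add hB2, tsum_mul_right, tsum_mul_right]
    ring
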